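/- Let ν be an idempotent mean on ℕ and let (ν_k) be the associated sequence of means on ℕ_↗^k. Then for every k ≥ 1 and every 1 ≤ j ≤ k+1, the pushforward of ν_{k+1} under α_j equals ν_k; that is, ν_{k+1}(f ∘ α_j) = ν_k(f) for every f ∈ ℓ^∞(ℕ_↗^k). -/

import Mathlib

/-!
Write `i` for the `0`-indexed position of the deleted entry of a tuple of length `m + 2`, and recall
that `ν_{k+1}` is computed by an outer `ν` in the last increment `x` and an inner `ν_k`.

* If the last entry is deleted, the inner value does not depend on `x`, and `ν` of a constant is
  that constant.
* If the entry next to last is deleted, the two outermost averages act on a function of the sum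
  of the last two increments, so idempotence merges them into one; the function is bounded
  by `abs_seqMean_le`.
* If an earlier entry is deleted, the deletion leaves the last entry of the inner tuple alone, so
  it commutes with `f ↦ f^x`, and induction on the length of the tuple applies.
-/

/-- `f` is a bounded real-valued function, i.e. an element of `ℓ^∞`. -/
def Bdd {X : Type*} (f : X → ℝ) : Prop := ∃ C : ℝ, ∀ x, |f x| ≤ C

/-- A mean on a set `X`: a positive normalized linear functional on `ℓ^∞(X)`
(we represent it as a functional on all functions, constrained only on bounded ones). -/
def IsMean {X : Type*} (ν : (X → ℝ) → ℝ) : Prop :=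
  (∀ f g : X → ℝ, Bdd f → Bdd g → ν (f + g) = ν f + ν g) ∧
  (∀ (c : ℝ) (f : X → ℝ), Bdd f → ν (c • f) = c * ν f) ∧
  (∀ f : X → ℝ, Bdd f → (∀ x, 0 ≤ f x) → 0 ≤ ν f) ∧
  ν (fun _ => 1) = 1

/-- An idempotent mean on `ℕ = {1,2,…}` (modelled by `ℕ+`):
`ν(f) = ν(x ↦ ν(x' ↦ f(x+x')))` for every bounded `f`. -/
def IsIdempotent (ν : (ℕ+ → ℝ) → ℝ) : Prop :=
  ∀ f : ℕ+ → ℝ, Bdd f → ν f = ν (fun x => ν (fun x' => f (x + x')))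

/-- The sequence of means on increasing tuples associated to a mean `ν` on `ℕ+`:
`seqMean ν k` is the mean `ν_{k+1}` on tuples of length `k+1` (so `seqMean ν 0 = ν_1 = ν`),
defined by `ν_{k+1}(f) = ν(x ↦ ν_k(f^x))` with `f^x(y_1,…,y_k) = f(y_1,…,y_k,y_k+x)`.
(The values of the argument on non-increasing tuples are never used.) -/
noncomputable def seqMean (ν : (ℕ+ → ℝ) → ℝ) : (k : ℕ) → ((Fin (k + 1) → ℕ+) → ℝ) → ℝ
  | 0 => fun f => ν fun x => f fun _ => x
  | k + 1 => fun f =>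
      ν fun x => seqMean ν k fun y => f (Fin.snoc y (y (Fin.last k) + x))

theorem IsMean.map_const {X : Type*} {ν : (X → ℝ) → ℝ} (h : IsMean ν) (c : ℝ) :
    ν (fun _ => c) = c := by
  have h1 := h.2.1 c (fun _ => 1) ⟨1, by simp⟩
  rw [h.2.2.2, mul_one] at h1
  convert h1 using 2
  funext x
  simp

theorem IsMean.le_of_le {X : Type*} {ν : (X → ℝ) → ℝ} (h : IsMean ν) {f : X → ℝ} (hf : Bdd f)
    {C : ℝ} (hC : ∀ x, f x ≤ C) : ν f ≤ C := by
  have hneg : Bdd ((-1 : ℝ) • f) := by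
    obtain ⟨D, hD⟩ := hf
    exact ⟨D, fun x => by simpa using hD x⟩
  have h1 := h.1 (fun _ => C) ((-1 : ℝ) • f) ⟨|C|, fun _ => le_rfl⟩ hneg
  rw [h.map_const, h.2.1 _ _ hf] at h1
  have h2 : 0 ≤ ν ((fun _ => C) + (-1 : ℝ) • f) := by
    refine h.2.2.1 _ ?_ fun x => by simpa using hC x
    obtain ⟨D, hD⟩ := hneg
    exact ⟨|C| + D, fun x => (abs_add_le _ _).trans (by have := hD x; gcongr)⟩
  linarith

theorem IsMean.abs_le {X : Type*} {ν : (X → ℝ) → ℝ} (h : IsMean ν) {f : X → ℝ}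
    {C : ℝ} (hC : ∀ x, |f x| ≤ C) : |ν f| ≤ C := by
  have hf : Bdd f := ⟨C, hC⟩
  have h1 := h.le_of_le hf fun x => (_root_.abs_le.1 (hC x)).2
  have h2 := h.le_of_le (f := (-1 : ℝ) • f) (C := C) ⟨C, fun x => by simpa using hC x⟩
    fun x => by
      have := (_root_.abs_le.1 (hC x)).1
      simp only [Pi.smul_apply, smul_eq_mul]
      linarith
  rw [h.2.1 _ _ hf] at h2
  exact _root_.abs_le.2 ⟨by linarith, h1⟩

theorem abs_seqMean_le {ν : (ℕ+ → ℝ) → ℝ} (h : IsMean ν) (k : ℕ) :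
    ∀ (f : (Fin (k + 1) → ℕ+) → ℝ) (C : ℝ), (∀ y, |f y| ≤ C) → |seqMean ν k f| ≤ C := by
  induction k with
  | zero => exact fun f C hC => h.abs_le fun x => hC _
  | succ k ih => exact fun f C hC => h.abs_le fun x => ih _ _ fun y => hC _

/-- Deleting an entry other than the last commutes with appending a last entry. -/
theorem snoc_comp_castSucc_succAbove {n : ℕ} (y : Fin (n + 2) → ℕ+) (z : ℕ+) (i : Fin (n + 2)) :
    (Fin.snoc y z : Fin (n + 3) → ℕ+) ∘ i.castSucc.succAbove
      = (Fin.snoc (y ∘ i.succAbove) z : Fin (n + 2) → ℕ+) := by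
  funext t
  refine Fin.lastCases ?_ (fun t => ?_) t
  · simp
  · simp [Fin.castSucc_succAbove_castSucc]

theorem snoc_comp_last_succAbove {n : ℕ} (y : Fin n → ℕ+) (z : ℕ+) :
    (Fin.snoc y z : Fin (n + 1) → ℕ+) ∘ (Fin.last n).succAbove = y := by
  funext t
  simp

/-- Invariance under deletion of the `0`-indexed entry `i`, by induction on the length of the
tuples with `i` and `f` arbitrary: `Fin.lastCases` separates the last entry, the one next to
last, and the earlier ones, which are passed to the induction hypothesis. -/
theorem seqMean_succAbove {ν : (ℕ+ → ℝ) → ℝ} (hmean : IsMean ν) (hidem : IsIdempotent ν) (m : ℕ) :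
    ∀ (i : Fin (m + 2)) (f : (Fin (m + 1) → ℕ+) → ℝ), Bdd f →
      seqMean ν (m + 1) (fun y => f (y ∘ i.succAbove)) = seqMean ν m f := by
  induction m with
  | zero =>
    intro i f hf
    induction i using Fin.lastCases with
    | last =>
      simp only [seqMean, snoc_comp_last_succAbove]
      exact hmean.map_const _
    | cast i =>
      obtain ⟨C, hC⟩ := hf
      have hsum : ∀ x x' : ℕ+, (Fin.snoc (fun _ : Fin 1 => x') (x' + x) : Fin 2 → ℕ+)
          ∘ i.castSucc.succAbove = fun _ => x + x' := by
        intro x x'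
        funext t
        fin_cases i
        fin_cases t
        exact add_comm x' x
      simp only [seqMean, hsum]
      exact (hidem (fun x => f fun _ => x) ⟨C, fun x => hC _⟩).symm
  | succ n ih =>
    intro i f hf
    obtain ⟨C, hC⟩ := hf
    rw [seqMean]
    induction i using Fin.lastCases with
    | last =>
      simp only [snoc_comp_last_succAbove]
      exact hmean.map_const _
    | cast i =>
      simp only [snoc_comp_castSucc_succAbove]
      induction i using Fin.lastCases with
      | last =>
        simp only [seqMean, snoc_comp_last_succAbove, Fin.snoc_last]
        rw [hidem (fun x => seqMean ν n fun y => f (Fin.snoc y (y (Fin.last n) + x)))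
          ⟨C, fun x => abs_seqMean_le hmean n _ _ fun y => hC _⟩]
        have hadd : ∀ a b c : ℕ+, a + b + c = a + (c + b) := fun a b c => by
          rw [add_assoc, add_comm b c]
        simp only [hadd]
      | cast i =>
        have hlast : ∀ y : Fin (n + 2) → ℕ+,
            y (Fin.last (n + 1)) = (y ∘ i.castSucc.succAbove) (Fin.last n) := by
          intro y
          simp
        -- The increment is now added to the last entry of the shortened tuple, so the argument
        -- of the inner mean has the form `f^x ∘ α`.
        simp only [hlast]
        conv_rhs => rw [seqMean]
        congr 1
        funext x
        exact ih i.castSucc (fun y => f (Fin.snoc y (y (Fin.last n) + x))) ⟨C, fun y => hC _⟩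

/-- `α_j ν_{k+1} = ν_k` for all `k ≥ 1` and `1 ≤ j ≤ k+1`.  Here `k = m+1`, the
mean `ν_{k+1}` is `seqMean ν (m+1)` (a mean on tuples of length `m+2`), the mean
`ν_k` is `seqMean ν m`, and `α_j` deletes the `j`-th entry (its `0`-indexed
version being composition with `Fin.succAbove ⟨j-1,_⟩`). -/
theorem stmt_2 (ν : (ℕ+ → ℝ) → ℝ) (hmean : IsMean ν) (hidem : IsIdempotent ν)
    (m : ℕ) (j : ℕ) (hj1 : 1 ≤ j) (hj2 : j ≤ m + 2)
    (f : (Fin (m + 1) → ℕ+) → ℝ) (hf : Bdd f) :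
    seqMean ν (m + 1) (fun y => f (y ∘ (⟨j - 1, by omega⟩ : Fin (m + 2)).succAbove))
      = seqMean ν m f :=
  seqMean_succAbove hmean hidem m _ f hf
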